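/- arXiv:2307.15211 — 2 statements merged into one kernel-verified Lean document; each statement's English description precedes it below -/
import Mathlib

section
/- Let D_1, D_2, D_3, D_4 be the four chord diagrams of order n obtained from a common configuration as described. For every set A of chords of the common configuration with c ∉ A and c' ∉ A (regarding A as a set of chords of each D_i), the genera of the corresponding partial duals satisfy g_A(D_1) = g_A(D_4) and g_A(D_2) = g_A(D_3). -/
/-- Number of cycles (orbits, counting fixed points) of a self-map:
the number of connected components of its functional graph. For a permutation
this is the number of cycles, counting fixed points. -/
noncomputable def cycles {α : Type*} (f : α → α) : ℕ :=
  Nat.card (Quot fun i j => f i = j)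

-- `restrictTo σ A` agrees with `σ` on `A` and fixes everything else.
-- If `A` is the set of endpoints of a set of chords of `σ`, this is `σ_A`.
open Classical in
noncomputable def restrictTo {α : Type*} (f : α → α) (A : Set α) : α → α :=
  fun i => if i ∈ A then f i else i

/-- The rotation `i ↦ i + 1` of the `2n` points of a chord diagram. -/
def rot (n : ℕ) : ZMod (2 * n) → ZMod (2 * n) := fun i => i + 1

/-- Genus of the partial dual of the chord diagram `σ` relative to the set of
chords whose endpoint set is the (`σ`-invariant) set `A`. -/
noncomputable def pdGenus (n : ℕ) (σ : ZMod (2 * n) → ZMod (2 * n))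
    (A : Set (ZMod (2 * n))) : ℕ :=
  (n + 2 - cycles (rot n ∘ restrictTo σ A) - cycles (rot n ∘ restrictTo σ Aᶜ)) / 2

/-- Genus of the one-vertex ribbon graph of the chord diagram `σ`. -/
noncomputable def genus (n : ℕ) (σ : ZMod (2 * n) → ZMod (2 * n)) : ℕ :=
  (n + 1 - cycles (rot n ∘ σ)) / 2

/-- The partial-dual genus polynomial `∂Γ_σ(z) = Σ_A z^{g_A(σ)}`, the sum being
over all sets `A` of chords of `σ` (encoded as `σ`-invariant subsets of the
`2n` points). -/
noncomputable def pdPoly (n : ℕ) (σ : ZMod (2 * n) → ZMod (2 * n)) : Polynomial ℤ :=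
  if h : n = 0 then 1 else
    haveI : NeZero (2 * n) := ⟨by omega⟩
    ∑ A ∈ Finset.univ.filter (fun A : Finset (ZMod (2 * n)) => ∀ i ∈ A, σ i ∈ A),
      Polynomial.X ^ pdGenus n σ (↑A : Set (ZMod (2 * n)))

/-- `φ : ZMod (2n-1) → ZMod (2n)` is the cyclic-order-preserving identification of
the `2n-1` configuration points with the complement of the inserted point `x`:
it avoids `x` and each step advances by one position on the circle, skipping `x`. -/
def IsInsertion {m N : ℕ} (φ : ZMod m → ZMod N) (x : ZMod N) : Prop :=
  φ 0 ≠ x ∧ ∀ j, φ (j + 1) = if φ j + 1 = x then φ j + 2 else φ j + 1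

/-- A configuration of `2n-1` marked points on the circle: a distinguished chord
`c = {p, q}`, a distinguished unpaired point `u`, and a fixed-point-free pairing
of the remaining `2n-4` points into background chords; all encoded by the
involution `τ` whose unique fixed point is `u` and with `τ p = q`. -/
def IsConfig (n : ℕ) (τ : ZMod (2 * n - 1) → ZMod (2 * n - 1))
    (p q u : ZMod (2 * n - 1)) : Prop :=
  Function.Involutive τ ∧ τ p = q ∧ p ≠ q ∧ τ u = u ∧ ∀ j, τ j = j → j = u

/-- `D` is the chord diagram of order `n` obtained from the configuration `τ`
by inserting the extra point `x` (via the order-preserving identification `φ`)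
together with the new chord `c' = {x, u}`; all other chords are unchanged. -/
def IsInsertedDiagram (n : ℕ) (τ : ZMod (2 * n - 1) → ZMod (2 * n - 1))
    (u : ZMod (2 * n - 1)) (φ : ZMod (2 * n - 1) → ZMod (2 * n)) (x : ZMod (2 * n))
    (D : ZMod (2 * n) → ZMod (2 * n)) : Prop :=
  IsInsertion φ x ∧ (∀ j, j ≠ u → D (φ j) = φ (τ j)) ∧ D (φ u) = x ∧ D x = φ u

/-!
Write `r` for the rotation of the configuration points, `t` for the pairing restricted to `Aᶜ`, and
`ρ = r ∘ t`. Identify the points of each diagram with the configuration points together with one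
extra point `x`, encoded as `none`. Since `c'` contributes the transposition `(x u)` and inserting
`x` before `p` turns `r` into `(x p) r`, the boundary permutation of `Aᶜ` is `(x p) ρ (x u)` for
`D₁`. For `D₄`, where `x` precedes `q + 1 = ρ p`, it is `(x (ρ p)) ρ (x u) = ρ (x p) (x u)`. The
former is conjugate to `ρ (x u) (x p)`, and bypassing `x` turns either product into `ρ (p u)`, so
both have the same number of cycles. In the boundary permutation of `A` the point `x` is not on a
chord, and bypassing it leaves a map that depends only on the configuration.
-/

open Function Equiv

section Cycles

variable {α β : Type*}

lemma quotMk_eq_of_apply_eq {f : α → α} {a b : α} (h : f a = b) :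
    Quot.mk (fun i j => f i = j) a = Quot.mk _ b :=
  Quot.sound (r := fun i j => f i = j) h

lemma cycles_comp_comm (f : β → α) (g : α → β) : cycles (f ∘ g) = cycles (g ∘ f) :=
  Nat.card_congr
    { toFun := Quot.map g fun _ _ h => congrArg g h
      invFun := Quot.map f fun _ _ h => congrArg f h
      left_inv := Quot.ind fun _ => (quotMk_eq_of_apply_eq rfl).symm
      right_inv := Quot.ind fun _ => (quotMk_eq_of_apply_eq rfl).symm }

lemma cycles_eq_of_semiconj (e : α ≃ β) {f : α → α} {g : β → β} (h : Semiconj e f g) :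
    cycles g = cycles f := by
  have hf : f = e.symm ∘ (g ∘ e) := by rw [← h.comp_eq, ← comp_assoc, e.symm_comp_self, id_comp]
  rw [hf, cycles_comp_comm, comp_assoc, e.self_comp_symm, comp_id]

lemma cycles_eq_of_bypass_none {F : Option α → Option α} {f : α → α} {b : α}
    (hnone : F none = some b)
    (hsome : ∀ a, F (some a) = some (f a) ∨ F (some a) = none ∧ f a = b) :
    cycles F = cycles f := by
  have getD_congr (o o' : Option α) (h : F o = o') :
      Quot.mk (fun i j => f i = j) (o.getD b) = Quot.mk _ (o'.getD b) := by
    subst h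
    rcases o with _ | a
    · rw [hnone]; rfl
    · refine quotMk_eq_of_apply_eq ?_
      rcases hsome a with ha | ⟨ha, hb⟩
      · rw [ha]; rfl
      · rw [ha]; exact hb
  have some_congr (a a' : α) (h : f a = a') :
      Quot.mk (fun i j => F i = j) (some a) = Quot.mk _ (some a') := by
    subst h
    rcases hsome a with ha | ⟨ha, hb⟩
    · exact quotMk_eq_of_apply_eq ha
    · exact (quotMk_eq_of_apply_eq ha).trans (quotMk_eq_of_apply_eq (hb ▸ hnone))
  refine Nat.card_congr
    { toFun := Quot.lift _ getD_congr
      invFun := Quot.lift _ some_congr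
      left_inv := Quot.ind fun o => ?_
      right_inv := Quot.ind fun _ => rfl }
  rcases o with _ | a
  · exact (quotMk_eq_of_apply_eq hnone).symm
  · rfl

variable [DecidableEq α]

lemma cycles_swap_none_comp_map (a : α) (f : α → α) :
    cycles (swap none (some a) ∘ Option.map f) = cycles f := by
  refine cycles_eq_of_bypass_none (b := a) (by simp) fun j => ?_
  by_cases hj : f j = a
  · simp [hj]
  · simp [swap_apply_of_ne_of_ne, hj]

lemma cycles_map_comp_swap_none_comp_swap_none (f : α → α) {a b : α} (hab : a ≠ b) :
    cycles (Option.map f ∘ swap none (some a) ∘ swap none (some b)) = cycles (f ∘ swap a b) := by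
  refine cycles_eq_of_bypass_none (b := f b) ?_ fun j => ?_
  · simp [swap_apply_of_ne_of_ne, hab.symm]
  · by_cases hja : j = a
    · simp [hja, hab, swap_apply_of_ne_of_ne]
    · by_cases hjb : j = b
      · simp [hjb]
      · simp [swap_apply_of_ne_of_ne, hja, hjb]

lemma cycles_map_comp_swap_none_comm (f : α → α) (a b : α) :
    cycles (Option.map f ∘ swap none (some a) ∘ swap none (some b)) =
      cycles (Option.map f ∘ swap none (some b) ∘ swap none (some a)) := by
  rcases eq_or_ne a b with rfl | hab
  · rfl
  · rw [cycles_map_comp_swap_none_comp_swap_none f hab,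
      cycles_map_comp_swap_none_comp_swap_none f hab.symm, swap_comm]

lemma cycles_swap_none_comp_map_comp_swap_none {f : α → α} (hf : Injective f) (a b : α) :
    cycles (swap none (some a) ∘ Option.map f ∘ swap none (some b)) =
      cycles (swap none (some (f a)) ∘ Option.map f ∘ swap none (some b)) := by
  have hswap : swap none (some (f a)) ∘ Option.map f = Option.map f ∘ swap none (some a) :=
    (Option.map_injective hf).swap_comp none (some a)
  calc cycles (swap none (some a) ∘ Option.map f ∘ swap none (some b))
      = cycles (Option.map f ∘ swap none (some b) ∘ swap none (some a)) := cycles_comp_comm _ _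
    _ = cycles (Option.map f ∘ swap none (some a) ∘ swap none (some b)) :=
        cycles_map_comp_swap_none_comm f b a
    _ = cycles (swap none (some (f a)) ∘ Option.map f ∘ swap none (some b)) := by
        rw [← comp_assoc, ← hswap, comp_assoc]

end Cycles

lemma restrictTo_injective {α : Type*} {f : α → α} {A : Set α} (hf : Set.InjOn f A)
    (hA : Set.MapsTo f A A) : Injective (restrictTo f A) := by
  intro i j hij
  by_cases hi : i ∈ A <;> by_cases hj : j ∈ A <;>
    simp only [restrictTo, hi, hj, if_true, if_false] at hij
  · exact hf hi hj hij
  · exact absurd (hij ▸ hA hi) hj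
  · exact absurd (hij ▸ hA hj) hi
  · exact hij

namespace IsInsertion

variable {m N : ℕ} {φ : ZMod m → ZMod N} {x : ZMod N} {p : ZMod m}

lemma add_one_eq_apply_add_one (h : IsInsertion φ x) (hx : x = φ p + 1) : x + 1 = φ (p + 1) := by
  rw [h.2, if_pos hx.symm, hx, add_assoc, one_add_one_eq_two]

lemma elim_surjective [NeZero N] (h : IsInsertion φ x) (hx : x + 1 = φ p) :
    Surjective fun o : Option (ZMod m) => o.elim x φ := by
  have hreach (k : ℕ) : ∃ o : Option (ZMod m), o.elim x φ = x + k := by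
    induction k with
    | zero => exact ⟨none, by simp⟩
    | succ k ih =>
      obtain ⟨_ | j, ho⟩ := ih <;> rw [Nat.cast_succ, ← add_assoc, ← ho]
      · exact ⟨some p, hx.symm⟩
      · by_cases hj : φ j + 1 = x
        · exact ⟨none, hj.symm⟩
        · exact ⟨some (j + 1), (h.2 j).trans (if_neg hj)⟩
  intro y
  simpa using hreach (y - x).val

/-- The identification of the points of the circle after an insertion with the old points (`some`)
and the inserted point (`none`). -/
noncomputable def equiv [NeZero m] (hN : N = m + 1) (h : IsInsertion φ x) (hx : x + 1 = φ p) :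
    Option (ZMod m) ≃ ZMod N :=
  haveI : NeZero N := ⟨by omega⟩
  ofBijective (fun o => o.elim x φ) <|
    (Fintype.bijective_iff_surjective_and_card _).2 ⟨h.elim_surjective hx, by simp [ZMod.card, hN]⟩

variable [NeZero m]

@[simp]
lemma equiv_none (hN : N = m + 1) (h : IsInsertion φ x) (hx : x + 1 = φ p) :
    h.equiv hN hx none = x := rfl

@[simp]
lemma equiv_some (hN : N = m + 1) (h : IsInsertion φ x) (hx : x + 1 = φ p)
    (j : ZMod m) : h.equiv hN hx (some j) = φ j := rfl

lemma injective (hN : N = m + 1) (h : IsInsertion φ x) (hx : x + 1 = φ p) : Injective φ :=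
  (h.equiv hN hx).injective.comp (Option.some_injective _)

lemma apply_ne (hN : N = m + 1) (h : IsInsertion φ x) (hx : x + 1 = φ p) (j : ZMod m) : φ j ≠ x :=
  (h.equiv hN hx).injective.ne (Option.some_ne_none j)

lemma apply_add_one_eq_iff (hN : N = m + 1) (h : IsInsertion φ x) (hx : x + 1 = φ p)
    (j : ZMod m) : φ j + 1 = x ↔ j + 1 = p := by
  constructor <;> intro hj
  · exact h.injective hN hx ((h.add_one_eq_apply_add_one hj.symm).symm.trans hx)
  · by_contra hne
    have hstep : φ j + 1 = x + 1 := by rw [hx, ← hj, h.2, if_neg hne]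
    exact h.apply_ne hN hx j (add_right_cancel hstep)

lemma semiconj_equiv_add_one (hN : N = m + 1) (h : IsInsertion φ x) (hx : x + 1 = φ p) :
    Semiconj (h.equiv hN hx) (swap none (some p) ∘ Option.map (· + 1)) (· + 1) := by
  rintro (_ | j)
  · simp [hx]
  · by_cases hj : j + 1 = p
    · simp [hj, (h.apply_add_one_eq_iff hN hx j).2 hj]
    · simp [hj, swap_apply_of_ne_of_ne, h.2, (h.apply_add_one_eq_iff hN hx j).not.2 hj]

end IsInsertion

namespace IsInsertedDiagram

variable {n : ℕ} {τ : ZMod (2 * n - 1) → ZMod (2 * n - 1)} {p u : ZMod (2 * n - 1)}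
  {φ : ZMod (2 * n - 1) → ZMod (2 * n)} {x : ZMod (2 * n)} {D : ZMod (2 * n) → ZMod (2 * n)}
  {B : Set (ZMod (2 * n - 1))}

lemma semiconj_restrictTo_image [NeZero (2 * n - 1)] (hN : 2 * n = 2 * n - 1 + 1)
    (h : IsInsertedDiagram n τ u φ x D) (hx : x + 1 = φ p) (huB : u ∉ B) :
    Semiconj (h.1.equiv hN hx) (Option.map (restrictTo τ B)) (restrictTo D (φ '' B)) := by
  have hxB : x ∉ φ '' B := fun ⟨j, _, hj⟩ => h.1.apply_ne hN hx j hj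
  have hmem (j) : φ j ∈ φ '' B ↔ j ∈ B := (h.1.injective hN hx).mem_set_image
  rintro (_ | j)
  · simp [restrictTo, hxB]
  · by_cases hj : j ∈ B
    · have hju : j ≠ u := ne_of_mem_of_not_mem hj huB
      simp [restrictTo, hmem, hj, h.2.1 j hju]
    · simp [restrictTo, hmem, hj]

lemma semiconj_restrictTo_compl_image [NeZero (2 * n - 1)] (hN : 2 * n = 2 * n - 1 + 1)
    (h : IsInsertedDiagram n τ u φ x D) (hx : x + 1 = φ p) (hu : τ u = u) (huB : u ∉ B) :
    Semiconj (h.1.equiv hN hx) (Option.map (restrictTo τ Bᶜ) ∘ swap none (some u))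
      (restrictTo D (φ '' B)ᶜ) := by
  have hxB : x ∉ φ '' B := fun ⟨j, _, hj⟩ => h.1.apply_ne hN hx j hj
  have hmem (j) : φ j ∈ φ '' B ↔ j ∈ B := (h.1.injective hN hx).mem_set_image
  have ⟨_, hD, hDu, hDx⟩ := h
  rintro (_ | j)
  · simp [restrictTo, hxB, huB, hu, hDx]
  · by_cases hju : j = u
    · simp [restrictTo, hmem, hju, huB, hDu]
    · by_cases hj : j ∈ B <;>
        simp [restrictTo, hmem, hj, hju, swap_apply_of_ne_of_ne, hD j hju]

lemma cycles_rot_comp_restrictTo_image (hn : n ≠ 0) (h : IsInsertedDiagram n τ u φ x D)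
    (hx : x + 1 = φ p) (huB : u ∉ B) :
    cycles (rot n ∘ restrictTo D (φ '' B)) = cycles ((· + 1) ∘ restrictTo τ B) := by
  have : NeZero (2 * n - 1) := ⟨by omega⟩
  have hN : 2 * n = 2 * n - 1 + 1 := by omega
  calc cycles (rot n ∘ restrictTo D (φ '' B))
      = cycles ((swap none (some p) ∘ Option.map (· + 1)) ∘ Option.map (restrictTo τ B)) :=
        cycles_eq_of_semiconj _ ((h.1.semiconj_equiv_add_one hN hx).comp_right
          (h.semiconj_restrictTo_image hN hx huB))
    _ = cycles ((· + 1) ∘ restrictTo τ B) := by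
        rw [comp_assoc, Option.map_comp_map, cycles_swap_none_comp_map]

lemma cycles_rot_comp_restrictTo_compl_image (hn : n ≠ 0) (h : IsInsertedDiagram n τ u φ x D)
    (hx : x + 1 = φ p) (hu : τ u = u) (huB : u ∉ B) :
    cycles (rot n ∘ restrictTo D (φ '' B)ᶜ) =
      cycles (swap none (some p) ∘ Option.map ((· + 1) ∘ restrictTo τ Bᶜ) ∘
        swap none (some u)) := by
  have : NeZero (2 * n - 1) := ⟨by omega⟩
  have hN : 2 * n = 2 * n - 1 + 1 := by omega
  rw [← Option.map_comp_map]
  exact cycles_eq_of_semiconj _ ((h.1.semiconj_equiv_add_one hN hx).comp_right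
    (h.semiconj_restrictTo_compl_image hN hx hu huB))

end IsInsertedDiagram

theorem pdGenus_eq_of_not_c_not_c'_general {n : ℕ} (hn : n ≠ 0)
    {τ : ZMod (2 * n - 1) → ZMod (2 * n - 1)} {p u : ZMod (2 * n - 1)}
    (hτ : Injective τ) (hu : τ u = u)
    {φ φ' : ZMod (2 * n - 1) → ZMod (2 * n)} {x x' : ZMod (2 * n)}
    {D D' : ZMod (2 * n) → ZMod (2 * n)}
    (h : IsInsertedDiagram n τ u φ x D) (hx : x + 1 = φ p)
    (h' : IsInsertedDiagram n τ u φ' x' D') (hx' : x' = φ' (τ p) + 1)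
    {B : Set (ZMod (2 * n - 1))} (hB : Set.MapsTo τ Bᶜ Bᶜ) (hp : p ∉ B) (huB : u ∉ B) :
    pdGenus n D (φ '' B) = pdGenus n D' (φ' '' B) := by
  have hxp' : x' + 1 = φ' (τ p + 1) := h'.1.add_one_eq_apply_add_one hx'
  have hρ : Injective ((· + 1) ∘ restrictTo τ Bᶜ) :=
    (add_left_injective 1).comp (restrictTo_injective hτ.injOn hB)
  have hρp : ((· + 1) ∘ restrictTo τ Bᶜ) p = τ p + 1 := by simp [restrictTo, hp]
  have himage : cycles (rot n ∘ restrictTo D (φ '' B)) =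
      cycles (rot n ∘ restrictTo D' (φ' '' B)) := by
    rw [h.cycles_rot_comp_restrictTo_image hn hx huB,
      h'.cycles_rot_comp_restrictTo_image hn hxp' huB]
  have hcompl : cycles (rot n ∘ restrictTo D (φ '' B)ᶜ) =
      cycles (rot n ∘ restrictTo D' (φ' '' B)ᶜ) := by
    rw [h.cycles_rot_comp_restrictTo_compl_image hn hx hu huB,
      h'.cycles_rot_comp_restrictTo_compl_image hn hxp' hu huB,
      cycles_swap_none_comp_map_comp_swap_none hρ, hρp]
  rw [pdGenus, pdGenus, himage, hcompl]

/-- For a set `A` of chords of the common configuration containing neither `c`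
nor `c'`, the partial duals satisfy `g_A(D₁) = g_A(D₄)` and `g_A(D₂) = g_A(D₃)`. -/
theorem pdGenus_eq_of_not_c_not_c' (n : ℕ) (hn : 2 ≤ n)
    (τ : ZMod (2 * n - 1) → ZMod (2 * n - 1)) (p q u : ZMod (2 * n - 1))
    (hτ : IsConfig n τ p q u)
    (φ₁ φ₂ φ₃ φ₄ : ZMod (2 * n - 1) → ZMod (2 * n))
    (x₁ x₂ x₃ x₄ : ZMod (2 * n))
    (D₁ D₂ D₃ D₄ : ZMod (2 * n) → ZMod (2 * n))
    (h₁ : IsInsertedDiagram n τ u φ₁ x₁ D₁) (hx₁ : x₁ + 1 = φ₁ p)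
    (h₂ : IsInsertedDiagram n τ u φ₂ x₂ D₂) (hx₂ : x₂ = φ₂ p + 1)
    (h₃ : IsInsertedDiagram n τ u φ₃ x₃ D₃) (hx₃ : x₃ + 1 = φ₃ q)
    (h₄ : IsInsertedDiagram n τ u φ₄ x₄ D₄) (hx₄ : x₄ = φ₄ q + 1)
    (B : Set (ZMod (2 * n - 1))) (hB : ∀ j ∈ B, τ j ∈ B)
    (hc : p ∉ B) (hc' : u ∉ B) :
    pdGenus n D₁ (φ₁ '' B) = pdGenus n D₄ (φ₄ '' B) ∧
    pdGenus n D₂ (φ₂ '' B) = pdGenus n D₃ (φ₃ '' B) := by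
  obtain ⟨hinv, rfl, -, hu, -⟩ := hτ
  have hn₀ : n ≠ 0 := by omega
  have hBc : Set.MapsTo τ Bᶜ Bᶜ := fun j hj hτj => hj (hinv j ▸ hB _ hτj)
  constructor
  · exact pdGenus_eq_of_not_c_not_c'_general hn₀ hinv.injective hu h₁ hx₁ h₄ hx₄ hBc hc hc'
  · have hx₂' : x₂ = φ₂ (τ (τ p)) + 1 := by rw [hinv p, hx₂]
    exact (pdGenus_eq_of_not_c_not_c'_general hn₀ hinv.injective hu h₃ hx₃ h₂ hx₂'
      hBc (hBc hc) hc').symm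
end

section
/- The partial-dual genus polynomial is multiplicative under connected sum (juxtaposition) of chord diagrams: if σ₁ is a chord diagram of order n₁, σ₂ is a chord diagram of order n₂, and σ is the chord diagram of order n₁ + n₂ on ZMod (2(n₁+n₂)) whose first 2n₁ points are paired according to σ₁ and whose last 2n₂ points are paired according to σ₂ (shifted by 2n₁), with no chord joining the two blocks, then ∂Γ_σ(z) = ∂Γ_{σ₁}(z) · ∂Γ_{σ₂}(z). -/
/-!
The cycles of `f` are counted by the dimension of the space of functions constant along `f`. A
function constant along `f` and `g` is constant along `f ∘ g`, so the dimension formula gives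
`c(f) + c(g) ≤ N + c(f ∘ g)` on `N` points, while multiplicativity of the sign fixes the parity
of `N + c(f) + c(g) + c(f ∘ g)`. Applied to `(r ∘ σ_A) ∘ σ_A = r` and `(r ∘ σ_{Aᶜ}) ∘ σ_{Aᶜ} = r`,
these two facts show that the truncated subtractions and the division in the definition of the
genus are exact.

The rotation of a connected sum is the disjoint union of the two rotations followed by the
transposition of the first points of the blocks. This transposition merges one cycle of the first
block with one of the second, both for `A` and for `Aᶜ`, so the genus is additive. As the invariant
sets of the connected sum are the pairs of invariant sets of the summands, the polynomial is
multiplicative.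
-/

section Invariants

variable {α : Type*}

/-- The space of `ℚ`-valued functions on `α` that are constant along a self-map `f`, used to
count the cycles of `f` by linear algebra. -/
def invariants (f : α → α) : Submodule ℚ (α → ℚ) where
  carrier := {u | ∀ i, u (f i) = u i}
  add_mem' hu hv i := by simp [hu i, hv i]
  zero_mem' _ := rfl
  smul_mem' c u hu i := by simp [hu i]

theorem range_funLeft_quotMk (f : α → α) :
    LinearMap.range (LinearMap.funLeft ℚ ℚ (Quot.mk fun i j => f i = j)) = invariants f := by
  ext u
  constructor
  · rintro ⟨v, rfl⟩ i
    exact congrArg v (Quot.sound (r := fun i j => f i = j) rfl).symm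
  · intro hu
    exact ⟨Quot.lift u (by rintro i _ rfl; exact (hu i).symm), rfl⟩

theorem finrank_invariants [Finite α] (f : α → α) :
    Module.finrank ℚ (invariants f) = cycles f := by
  have := Fintype.ofFinite (Quot fun i j => f i = j)
  rw [← range_funLeft_quotMk, LinearMap.finrank_range_of_inj
    (LinearMap.funLeft_injective_of_surjective ℚ ℚ _ Quot.mk_surjective),
    Module.finrank_fintype_fun_eq_card, cycles, Nat.card_eq_fintype_card]

theorem cycles_add_cycles_le [Finite α] (f g : α → α) :
    cycles f + cycles g ≤ Nat.card α + cycles (f ∘ g) := by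
  have := Fintype.ofFinite α
  have hinf : invariants f ⊓ invariants g ≤ invariants (f ∘ g) :=
    fun u ⟨hf, hg⟩ i => (hf (g i)).trans (hg i)
  have hsup := (invariants f ⊔ invariants g).finrank_le
  rw [Module.finrank_fintype_fun_eq_card, ← Nat.card_eq_fintype_card] at hsup
  simp only [← finrank_invariants]
  rw [← Submodule.finrank_sup_add_finrank_inf_eq]
  exact add_le_add hsup (Submodule.finrank_mono hinf)

variable [DecidableEq α]

/-- If `v` also separated `x` from `y`, then `f` would map the points at which `u` and `v` take
the same values as at `x` injectively into themselves, while missing `x`. -/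
theorem eq_of_mem_invariants_swap_comp [Finite α] {f : α → α} (hf : f.Injective) {x y : α}
    {u v : α → ℚ} (hu : u ∈ invariants f) (hxy : u x ≠ u y)
    (hv : v ∈ invariants (Equiv.swap x y ∘ f)) : v x = v y := by
  by_contra hne
  let S : Set α := {i | u i = u x ∧ v i = v x}
  have hS : ∀ i ∈ S, f i ∈ S ∧ f i ≠ x := by
    rintro i ⟨hui, hvi⟩
    have hufi : u (f i) = u x := (hu i).trans hui
    have hvfi : v (Equiv.swap x y (f i)) = v x := (hv i).trans hvi
    have hy : f i ≠ y := fun h => hxy (by rw [← hufi, h])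
    have hx : f i ≠ x := fun h => hne (by rw [← hvfi, h, Equiv.swap_apply_left])
    rw [Equiv.swap_apply_of_ne_of_ne hx hy] at hvfi
    exact ⟨⟨hufi, hvfi⟩, hx⟩
  have himage : f '' S = S := Set.eq_of_subset_of_ncard_le
    (Set.image_subset_iff.2 fun i hi => (hS i hi).1) (Set.ncard_image_of_injective S hf).ge
  obtain ⟨i, hi, hix⟩ : x ∈ f '' S := by rw [himage]; exact ⟨rfl, rfl⟩
  exact (hS i hi).2 hix

theorem invariants_swap_comp_lt [Finite α] {f : α → α} (hf : f.Injective) {x y : α}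
    {u : α → ℚ} (hu : u ∈ invariants f) (hxy : u x ≠ u y) :
    invariants (Equiv.swap x y ∘ f) < invariants f := by
  refine SetLike.lt_iff_le_and_exists.2 ⟨fun v hv i => ?_, u, hu,
    fun hu' => hxy (eq_of_mem_invariants_swap_comp hf hu hxy hu')⟩
  have hvxy := eq_of_mem_invariants_swap_comp hf hu hxy hv
  have hswap : v (Equiv.swap x y (f i)) = v (f i) := by
    rw [Equiv.swap_apply_def]
    split_ifs with hx hy
    · rw [hx, hvxy]
    · rw [hy, hvxy]
    · rfl
  rw [← hswap]
  exact hv i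

end Invariants

section Permutations

open Equiv.Perm

variable {α : Type*}

theorem quotMk_eq_of_sameCycle [Finite α] {p : Equiv.Perm α} {i j : α} (h : p.SameCycle i j) :
    Quot.mk (fun i j => p i = j) i = Quot.mk (fun i j => p i = j) j := by
  obtain ⟨k, -, rfl⟩ := h.exists_pow_eq'
  clear h
  induction k with
  | zero => rfl
  | succ k ih => rw [ih, pow_succ']; exact Quot.sound rfl

section CycleType

variable [Fintype α] [DecidableEq α]

theorem cycles_eq_card_cycleType_add (p : Equiv.Perm α) :
    cycles p = p.cycleType.card + Fintype.card (Function.fixedPoints p) := by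
  let e : Quot (fun i j => p i = j) → p.cycleFactorsFinset ⊕ Function.fixedPoints p :=
    Quot.lift (fun i => if h : p i = i then Sum.inr ⟨i, h⟩ else
      Sum.inl ⟨p.cycleOf i, cycleOf_mem_cycleFactorsFinset_iff.2 (mem_support.2 h)⟩) (by
        rintro i _ rfl
        by_cases h : p i = i <;> simp [h])
  have hinj : e.Injective := by
    rintro ⟨i⟩ ⟨j⟩ h
    by_cases hi : p i = i <;> by_cases hj : p j = j <;>
      simp only [e, hi, hj, dite_true, dite_false, reduceCtorEq, Sum.inl.injEq, Sum.inr.injEq] at h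
    · exact congrArg _ (Subtype.mk.inj h)
    · exact quotMk_eq_of_sameCycle ((sameCycle_iff_cycleOf_eq_of_mem_support
        (mem_support.2 hi) (mem_support.2 hj)).2 (Subtype.mk.inj h))
  have hsurj : e.Surjective := by
    rintro (⟨c, hc⟩ | ⟨i, hi⟩)
    · obtain ⟨i, hi⟩ := (mem_cycleFactorsFinset_iff.1 hc).1.nonempty_support
      have hpi : p i ≠ i := mem_support.1 (mem_cycleFactorsFinset_support_le hc hi)
      exact ⟨Quot.mk _ i, by simp [e, hpi, cycle_is_cycleOf hi hc]⟩
    · exact ⟨Quot.mk _ i, dif_pos hi⟩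
  rw [cycles, Nat.card_congr (Equiv.ofBijective e ⟨hinj, hsurj⟩), Nat.card_eq_fintype_card,
    Fintype.card_sum, Fintype.card_coe, cycleType_def, Multiset.card_map, Finset.card_val]

theorem cycles_add_card_support (p : Equiv.Perm α) :
    cycles p + p.support.card = Fintype.card α + p.cycleType.card := by
  have hfix := p.card_fixedPoints
  have hle := p.support.card_le_univ
  rw [sum_cycleType] at hfix
  rw [cycles_eq_card_cycleType_add, hfix]
  omega

theorem sign_eq_neg_one_pow_cycles (p : Equiv.Perm α) :
    sign p = (-1) ^ (Fintype.card α + cycles p) := by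
  have h := cycles_add_card_support p
  rw [sign_of_cycleType, sum_cycleType, neg_one_pow_congr]
  grind

theorem two_mul_cycles_of_sq_eq_one {p : Equiv.Perm α} (hp : p ^ 2 = 1) :
    2 * cycles p + p.support.card = 2 * Fintype.card α := by
  have h := cycles_add_card_support p
  have hsum := sum_cycleType p
  rw [cycleType_of_pow_prime_eq_one hp, Multiset.sum_replicate, smul_eq_mul] at hsum
  omega

theorem cycles_swap_add_one {x y : α} (hxy : x ≠ y) :
    cycles (Equiv.swap x y) + 1 = Fintype.card α := by
  have h := two_mul_cycles_of_sq_eq_one (p := Equiv.swap x y) (by simp [sq])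
  rw [card_support_swap hxy] at h
  omega

end CycleType

theorem even_cycles_mul [Finite α] (p q : Equiv.Perm α) :
    Even (Nat.card α + cycles p + cycles q + cycles (p * q : Equiv.Perm α)) := by
  classical
  have := Fintype.ofFinite α
  have h : sign p * sign q * sign (p * q) = 1 := by rw [Equiv.Perm.sign_mul, Int.units_mul_self]
  simp only [sign_eq_neg_one_pow_cycles] at h
  rw [← pow_add, ← pow_add, neg_one_pow_eq_one_iff_even (by decide)] at h
  rw [Nat.card_eq_fintype_card]
  grind

theorem cycles_swap_comp_add_one [Finite α] [DecidableEq α] (p : Equiv.Perm α) {x y : α}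
    {u : α → ℚ} (hu : u ∈ invariants p) (hxy : u x ≠ u y) :
    cycles (Equiv.swap x y ∘ p) + 1 = cycles p := by
  have := Fintype.ofFinite α
  have hlt := Submodule.finrank_lt_finrank_of_lt (invariants_swap_comp_lt p.injective hu hxy)
  have hle := cycles_add_cycles_le (Equiv.swap x y) p
  have hswap := cycles_swap_add_one (fun h => hxy (congrArg u h))
  rw [finrank_invariants, finrank_invariants] at hlt
  rw [Nat.card_eq_fintype_card] at hle
  omega

end Permutations

section Sums

open Function

variable {α β : Type*}

theorem cycles_congr (e : α ≃ β) {f : α → α} {g : β → β} (h : Semiconj e f g) :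
    cycles f = cycles g :=
  Nat.card_congr (Quot.congr e fun i j => by rw [← h i, e.apply_eq_iff_eq])

theorem cycles_sumMap [Finite α] [Finite β] (f : α → α) (g : β → β) :
    cycles (Sum.map f g) = cycles f + cycles g := by
  rw [cycles, cycles, cycles, ← Nat.card_sum]
  refine Nat.card_congr
    { toFun := Quot.lift (Sum.map (Quot.mk _) (Quot.mk _)) ?_
      invFun := Sum.elim (Quot.map Sum.inl fun _ _ h => congrArg Sum.inl h)
        (Quot.map Sum.inr fun _ _ h => congrArg Sum.inr h)
      left_inv := ?_
      right_inv := ?_ }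
  · rintro (i | j) _ rfl
    · exact congrArg Sum.inl (Quot.sound rfl)
    · exact congrArg Sum.inr (Quot.sound rfl)
  · rintro ⟨i | j⟩ <;> rfl
  · exact Sum.rec (Quot.ind fun _ => rfl) (Quot.ind fun _ => rfl)

theorem cycles_swap_comp_sumMap [Finite α] [Finite β] [DecidableEq α] [DecidableEq β]
    {f : α → α} {g : β → β} (hf : f.Bijective) (hg : g.Bijective) (a : α) (b : β) :
    cycles (Equiv.swap (Sum.inl a) (Sum.inr b) ∘ Sum.map f g) + 1 = cycles f + cycles g := by
  let p : Equiv.Perm (α ⊕ β) := .ofBijective (Sum.map f g) (hf.sumMap hg)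
  have hu : Sum.elim (1 : α → ℚ) (0 : β → ℚ) ∈ invariants p := by rintro (i | j) <;> rfl
  rw [← cycles_sumMap]
  exact cycles_swap_comp_add_one p hu one_ne_zero

end Sums

section RestrictTo

open Function

variable {α β : Type*}

theorem restrictTo_involutive {σ : α → α} (hσ : Involutive σ) {A : Set α} (hA : Set.MapsTo σ A A) :
    Involutive (restrictTo σ A) := by
  intro i
  by_cases hi : i ∈ A
  · simp [restrictTo, hi, hA hi, hσ i]
  · simp [restrictTo, hi]

theorem mapsTo_compl_of_involutive {σ : α → α} (hσ : Involutive σ) {A : Set α}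
    (hA : Set.MapsTo σ A A) : Set.MapsTo σ Aᶜ Aᶜ :=
  fun i hi hσi => hi (hσ i ▸ hA hσi)

theorem semiconj_restrictTo {f : α → β} {σ : α → α} {τ : β → β} (h : Semiconj f σ τ)
    (C : Set β) : Semiconj f (restrictTo σ (f ⁻¹' C)) (restrictTo τ C) := by
  intro i
  by_cases hi : f i ∈ C <;> simp [restrictTo, hi, h i]

theorem restrictTo_sumMap (σ : α → α) (τ : β → β) (D : Set (α ⊕ β)) :
    restrictTo (Sum.map σ τ) D =
      Sum.map (restrictTo σ (Sum.inl ⁻¹' D)) (restrictTo τ (Sum.inr ⁻¹' D)) := by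
  funext s
  rcases s with i | j
  · by_cases hi : Sum.inl i ∈ D <;> simp [restrictTo, hi]
  · by_cases hj : Sum.inr j ∈ D <;> simp [restrictTo, hj]

theorem two_mul_cycles_restrictTo [Finite α] {σ : α → α} (hσ : Involutive σ)
    (hfpf : ∀ i, σ i ≠ i) {A : Set α} (hA : Set.MapsTo σ A A) :
    2 * cycles (restrictTo σ A) + A.ncard = 2 * Nat.card α := by
  classical
  have := Fintype.ofFinite α
  have hinv := restrictTo_involutive hσ hA
  have hsq : hinv.toPerm ^ 2 = 1 := Equiv.ext hinv
  have hsupport : A = hinv.toPerm.support := by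
    ext i
    by_cases hi : i ∈ A <;> simp [restrictTo, hi, hfpf i]
  have hncard : A.ncard = hinv.toPerm.support.card := by
    rw [← Set.ncard_coe_finset, ← hsupport]
  rw [hncard, Nat.card_eq_fintype_card]
  exact two_mul_cycles_of_sq_eq_one hsq

theorem exists_cycles_restrictTo_add_two_mul_eq [Finite α] {r : α → α} (hr : r.Bijective)
    {σ : α → α} (hσ : Involutive σ) (hfpf : ∀ i, σ i ≠ i) {A : Set α} (hA : Set.MapsTo σ A A)
    {n : ℕ} (hn : Nat.card α = 2 * n) :
    ∃ g, cycles (r ∘ restrictTo σ A) + cycles (r ∘ restrictTo σ Aᶜ) + 2 * g =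
      n + 2 * cycles r := by
  obtain ⟨r, rfl⟩ : ∃ p : Equiv.Perm α, ⇑p = r := ⟨.ofBijective r hr, rfl⟩
  have hbound {B : Set α} (hB : Set.MapsTo σ B B) :
      cycles (r ∘ restrictTo σ B) + cycles (restrictTo σ B) ≤ 2 * n + cycles r ∧
      Even (2 * n + cycles (r ∘ restrictTo σ B) + cycles (restrictTo σ B) + cycles r) := by
    have hinv := restrictTo_involutive hσ hB
    have hcancel : r * hinv.toPerm * hinv.toPerm = r := by
      rw [mul_assoc, show hinv.toPerm * hinv.toPerm = 1 from Equiv.ext hinv, mul_one]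
    have hle := cycles_add_cycles_le (r ∘ restrictTo σ B) (restrictTo σ B)
    have heven := even_cycles_mul (r * hinv.toPerm) hinv.toPerm
    rw [comp_assoc, hinv.comp_self, hn] at hle
    rw [hcancel, hn] at heven
    exact ⟨hle, heven⟩
  have hA' := mapsTo_compl_of_involutive hσ hA
  obtain ⟨hle, heven⟩ := hbound hA
  obtain ⟨hle', heven'⟩ := hbound hA'
  have hsum : cycles (restrictTo σ A) + cycles (restrictTo σ Aᶜ) = 3 * n := by
    have hcycles := two_mul_cycles_restrictTo hσ hfpf hA
    have hcycles' := two_mul_cycles_restrictTo hσ hfpf hA'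
    have hcard := Set.ncard_add_ncard_compl A
    omega
  rw [Nat.even_iff] at heven heven'
  exact ⟨(n + 2 * cycles r - cycles (r ∘ restrictTo σ A) - cycles (r ∘ restrictTo σ Aᶜ)) / 2,
    by omega⟩

theorem cycles_comp_restrictTo_add_one {γ : Type*} [Finite α] [Finite β] [DecidableEq α]
    [DecidableEq β] {e : α ⊕ β ≃ γ} {r₁ : α → α} {r₂ : β → β} {r : γ → γ}
    (hr₁ : r₁.Bijective) (hr₂ : r₂.Bijective) {a : α} {b : β}
    (hr : Semiconj e (Equiv.swap (Sum.inl a) (Sum.inr b) ∘ Sum.map r₁ r₂) r)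
    {σ₁ : α → α} {σ₂ : β → β} {σ : γ → γ} (hσ : Semiconj e (Sum.map σ₁ σ₂) σ)
    (hσ₁ : Involutive σ₁) (hσ₂ : Involutive σ₂) {C : Set γ}
    (hC₁ : Set.MapsTo σ₁ ((e ∘ Sum.inl) ⁻¹' C) ((e ∘ Sum.inl) ⁻¹' C))
    (hC₂ : Set.MapsTo σ₂ ((e ∘ Sum.inr) ⁻¹' C) ((e ∘ Sum.inr) ⁻¹' C)) :
    cycles (r ∘ restrictTo σ C) + 1 =
      cycles (r₁ ∘ restrictTo σ₁ ((e ∘ Sum.inl) ⁻¹' C)) +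
        cycles (r₂ ∘ restrictTo σ₂ ((e ∘ Sum.inr) ⁻¹' C)) := by
  have hsemiconj := hr.comp_right (semiconj_restrictTo hσ C)
  rw [restrictTo_sumMap, comp_assoc, Sum.map_comp_map] at hsemiconj
  rw [← cycles_congr e hsemiconj]
  exact cycles_swap_comp_sumMap (hr₁.comp (restrictTo_involutive hσ₁ hC₁).bijective)
    (hr₂.comp (restrictTo_involutive hσ₂ hC₂).bijective) a b

end RestrictTo

section InvariantFinsets

open Function

variable {α β γ : Type*}

theorem coe_toLeft_map_symm (e : α ⊕ β ≃ γ) (C : Finset γ) :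
    ((C.map e.symm.toEmbedding).toLeft : Set α) = (e ∘ Sum.inl) ⁻¹' C := by
  ext i
  simp

theorem coe_toRight_map_symm (e : α ⊕ β ≃ γ) (C : Finset γ) :
    ((C.map e.symm.toEmbedding).toRight : Set β) = (e ∘ Sum.inr) ⁻¹' C := by
  ext i
  simp

theorem mapsTo_iff_of_semiconj {e : α ⊕ β → γ} (he : e.Surjective) {σ₁ : α → α}
    {σ₂ : β → β} {σ : γ → γ} (hσ : Semiconj e (Sum.map σ₁ σ₂) σ) (C : Set γ) :
    Set.MapsTo σ C C ↔ Set.MapsTo σ₁ ((e ∘ Sum.inl) ⁻¹' C) ((e ∘ Sum.inl) ⁻¹' C) ∧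
      Set.MapsTo σ₂ ((e ∘ Sum.inr) ⁻¹' C) ((e ∘ Sum.inr) ⁻¹' C) := by
  simp only [Set.MapsTo, he.forall, Sum.forall, ← hσ _]
  rfl

theorem sum_filter_invariant_mul_sum {R : Type*} [CommSemiring R] [Fintype α] [Fintype β]
    [Fintype γ] [DecidableEq α] [DecidableEq β] [DecidableEq γ] {e : α ⊕ β ≃ γ} {σ₁ : α → α}
    {σ₂ : β → β} {σ : γ → γ} (hσ : Semiconj e (Sum.map σ₁ σ₂) σ) (w₁ : Set α → R)
    (w₂ : Set β → R) :
    (∑ A : Finset α with ∀ i ∈ A, σ₁ i ∈ A, w₁ A) *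
        (∑ B : Finset β with ∀ i ∈ B, σ₂ i ∈ B, w₂ B) =
      ∑ C : Finset γ with ∀ i ∈ C, σ i ∈ C,
        w₁ ((e ∘ Sum.inl) ⁻¹' C) * w₂ ((e ∘ Sum.inr) ⁻¹' C) := by
  rw [Finset.sum_mul_sum, ← Finset.sum_product']
  symm
  refine Finset.sum_equiv (e.symm.finsetCongr.trans Finset.sumEquiv.toEquiv) (fun C => ?_)
    fun C _ => ?_
  · have h := mapsTo_iff_of_semiconj e.surjective hσ (C : Set γ)
    rw [← coe_toLeft_map_symm, ← coe_toRight_map_symm] at h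
    simpa [Set.MapsTo] using h
  · rw [← coe_toLeft_map_symm, ← coe_toRight_map_symm]
    rfl

end InvariantFinsets

section Rotation

open Function

theorem rot_bijective (n : ℕ) : (rot n).Bijective := (Equiv.addRight 1).bijective

theorem cycles_rot (n : ℕ) : cycles (rot n) = 1 := by
  let mk : ZMod (2 * n) → Quot fun i j => rot n i = j := Quot.mk _
  have hstep (i : ZMod (2 * n)) : mk (i + 1) = mk i :=
    (Quot.sound (r := fun i j => rot n i = j) rfl).symm
  have hmk (k : ℤ) : mk k = mk 0 := by
    induction k with
    | zero => rw [Int.cast_zero]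
    | succ k ih => rw [Int.cast_add, Int.cast_one, hstep, ih]
    | pred k ih => rw [← hstep, Int.cast_sub, Int.cast_one, sub_add_cancel, ih]
  have hunique : ∀ q, q = mk 0 := by
    rintro ⟨i⟩
    obtain ⟨k, rfl⟩ := ZMod.intCast_surjective i
    exact hmk k
  exact Nat.card_eq_one_iff_exists.2 ⟨mk 0, hunique⟩

theorem cycles_add_cycles_add_two_mul_pdGenus {n : ℕ} [NeZero n]
    {σ : ZMod (2 * n) → ZMod (2 * n)} (hσ : Involutive σ) (hfpf : ∀ i, σ i ≠ i)
    {A : Set (ZMod (2 * n))} (hA : Set.MapsTo σ A A) :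
    cycles (rot n ∘ restrictTo σ A) + cycles (rot n ∘ restrictTo σ Aᶜ) + 2 * pdGenus n σ A =
      n + 2 := by
  obtain ⟨g, hg⟩ := exists_cycles_restrictTo_add_two_mul_eq (rot_bijective n) hσ hfpf hA
    (Nat.card_zmod _)
  rw [cycles_rot] at hg
  rw [pdGenus]
  omega

end Rotation

section Block

open Function

variable {m n k : ℕ} [NeZero m] [NeZero n] [NeZero k]

theorem val_add_one_of_ne_zero {i : ZMod n} (h : i + 1 ≠ 0) : (i + 1).val = i.val + 1 := by
  have hcast : ((i.val + 1 : ℕ) : ZMod n) = i + 1 := by simp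
  have hne : i.val + 1 ≠ n := fun hn => h (by rw [← hcast, hn, ZMod.natCast_self])
  rw [← hcast]
  exact ZMod.val_cast_of_lt (lt_of_le_of_ne (ZMod.val_lt i) hne)

theorem val_add_one_of_eq_zero {i : ZMod n} (h : i + 1 = 0) : i.val + 1 = n := by
  have hdvd : n ∣ i.val + 1 := (ZMod.natCast_eq_zero_iff _ _).1 (by simpa using h)
  exact le_antisymm (ZMod.val_lt i) (Nat.le_of_dvd (Nat.succ_pos _) hdvd)

theorem val_finEquiv (i : Fin n) : (ZMod.finEquiv n i).val = i := by
  cases n with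
  | zero => exact i.elim0
  | succ n => rfl

theorem val_finEquiv_symm (i : ZMod n) : ((ZMod.finEquiv n).symm i : ℕ) = i.val := by
  rw [← val_finEquiv, RingEquiv.apply_symm_apply]

/-- The identification of two cyclic blocks of `m` and `n` points, placed one after the other,
with the `m + n` points of a single cycle. -/
def blockEquiv (h : m + n = k) : ZMod m ⊕ ZMod n ≃ ZMod k :=
  ((ZMod.finEquiv m).symm.toEquiv.sumCongr (ZMod.finEquiv n).symm.toEquiv).trans
    ((finSumFinEquiv.trans (finCongr h)).trans (ZMod.finEquiv k).toEquiv)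

theorem val_blockEquiv_inl (h : m + n = k) (i : ZMod m) :
    (blockEquiv h (Sum.inl i)).val = i.val := by
  simp [blockEquiv, val_finEquiv, val_finEquiv_symm]

theorem val_blockEquiv_inr (h : m + n = k) (j : ZMod n) :
    (blockEquiv h (Sum.inr j)).val = m + j.val := by
  simp [blockEquiv, val_finEquiv, val_finEquiv_symm]

theorem blockEquiv_inl (h : m + n = k) (i : ZMod m) :
    blockEquiv h (Sum.inl i) = (i.val : ZMod k) := by
  rw [← val_blockEquiv_inl h, ZMod.natCast_zmod_val]

theorem blockEquiv_inr (h : m + n = k) (j : ZMod n) :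
    blockEquiv h (Sum.inr j) = (m + j.val : ℕ) := by
  rw [← val_blockEquiv_inr h, ZMod.natCast_zmod_val]

theorem blockEquiv_inl_add_one (h : m + n = k) {i : ZMod m} (hi : i + 1 ≠ 0) :
    blockEquiv h (Sum.inl (i + 1)) = blockEquiv h (Sum.inl i) + 1 := by
  rw [blockEquiv_inl, blockEquiv_inl, val_add_one_of_ne_zero hi, Nat.cast_add_one]

theorem blockEquiv_inr_add_one (h : m + n = k) {j : ZMod n} (hj : j + 1 ≠ 0) :
    blockEquiv h (Sum.inr (j + 1)) = blockEquiv h (Sum.inr j) + 1 := by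
  rw [blockEquiv_inr, blockEquiv_inr, val_add_one_of_ne_zero hj, ← add_assoc, Nat.cast_add_one]

theorem blockEquiv_inr_zero (h : m + n = k) {i : ZMod m} (hi : i + 1 = 0) :
    blockEquiv h (Sum.inr 0) = blockEquiv h (Sum.inl i) + 1 := by
  rw [blockEquiv_inr, blockEquiv_inl, ← Nat.cast_add_one, val_add_one_of_eq_zero hi,
    ZMod.val_zero, add_zero]

theorem blockEquiv_inl_zero (h : m + n = k) {j : ZMod n} (hj : j + 1 = 0) :
    blockEquiv h (Sum.inl 0) = blockEquiv h (Sum.inr j) + 1 := by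
  rw [blockEquiv_inr, blockEquiv_inl, ← Nat.cast_add_one, add_assoc, val_add_one_of_eq_zero hj, h,
    ZMod.val_zero, Nat.cast_zero, ZMod.natCast_self]

theorem semiconj_blockEquiv_add_one (h : m + n = k) :
    Semiconj (blockEquiv h)
      (Equiv.swap (Sum.inl 0) (Sum.inr 0) ∘ Sum.map (· + 1) (· + 1)) (· + 1) := by
  rintro (i | j)
  · by_cases hi : i + 1 = 0
    · rw [comp_apply, Sum.map_inl, hi, Equiv.swap_apply_left, blockEquiv_inr_zero h hi]
    · rw [comp_apply, Sum.map_inl, Equiv.swap_apply_of_ne_of_ne (by simpa using hi) Sum.inl_ne_inr,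
        blockEquiv_inl_add_one h hi]
  · by_cases hj : j + 1 = 0
    · rw [comp_apply, Sum.map_inr, hj, Equiv.swap_apply_right, blockEquiv_inl_zero h hj]
    · rw [comp_apply, Sum.map_inr, Equiv.swap_apply_of_ne_of_ne Sum.inr_ne_inl (by simpa using hj),
        blockEquiv_inr_add_one h hj]

theorem semiconj_blockEquiv_sumMap (h : m + n = k) {σ₁ : ZMod m → ZMod m} {σ₂ : ZMod n → ZMod n}
    {σ : ZMod k → ZMod k} (hlo : ∀ i : ZMod k, i.val < m → (σ i).val = (σ₁ (i.val : ZMod m)).val)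
    (hhi : ∀ i : ZMod k, m ≤ i.val → (σ i).val = m + (σ₂ ((i.val - m : ℕ) : ZMod n)).val) :
    Semiconj (blockEquiv h) (Sum.map σ₁ σ₂) σ := by
  rintro (i | j) <;> apply ZMod.val_injective
  · have hi : (blockEquiv h (Sum.inl i)).val < m := by
      rw [val_blockEquiv_inl]
      exact ZMod.val_lt i
    rw [hlo _ hi, Sum.map_inl, val_blockEquiv_inl, val_blockEquiv_inl, ZMod.natCast_zmod_val]
  · have hj : m ≤ (blockEquiv h (Sum.inr j)).val := by
      rw [val_blockEquiv_inr]
      exact Nat.le_add_right m _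
    rw [hhi _ hj, Sum.map_inr, val_blockEquiv_inr, val_blockEquiv_inr, Nat.add_sub_cancel_left,
      ZMod.natCast_zmod_val]

end Block

section ConnectedSum

open Function

theorem pdPoly_eq_sum (n : ℕ) [NeZero n] (σ : ZMod (2 * n) → ZMod (2 * n)) :
    pdPoly n σ = ∑ A : Finset (ZMod (2 * n)) with ∀ i ∈ A, σ i ∈ A,
      Polynomial.X ^ pdGenus n σ A :=
  dif_neg (NeZero.ne n)

variable {n₁ n₂ : ℕ} [NeZero n₁] [NeZero n₂] {σ₁ : ZMod (2 * n₁) → ZMod (2 * n₁)}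
  {σ₂ : ZMod (2 * n₂) → ZMod (2 * n₂)} {σ : ZMod (2 * (n₁ + n₂)) → ZMod (2 * (n₁ + n₂))}

theorem pdGenus_connected_sum (hinv₁ : Involutive σ₁) (hfpf₁ : ∀ i, σ₁ i ≠ i)
    (hinv₂ : Involutive σ₂) (hfpf₂ : ∀ i, σ₂ i ≠ i)
    (hσ : Semiconj (blockEquiv (mul_add 2 n₁ n₂).symm) (Sum.map σ₁ σ₂) σ)
    {C : Set (ZMod (2 * (n₁ + n₂)))} (hC : Set.MapsTo σ C C) :
    pdGenus (n₁ + n₂) σ C =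
      pdGenus n₁ σ₁ ((blockEquiv (mul_add 2 n₁ n₂).symm ∘ Sum.inl) ⁻¹' C) +
        pdGenus n₂ σ₂ ((blockEquiv (mul_add 2 n₁ n₂).symm ∘ Sum.inr) ⁻¹' C) := by
  obtain ⟨hC₁, hC₂⟩ := (mapsTo_iff_of_semiconj (Equiv.surjective _) hσ C).1 hC
  have hrot : Semiconj (blockEquiv (mul_add 2 n₁ n₂).symm)
      (Equiv.swap (Sum.inl 0) (Sum.inr 0) ∘ Sum.map (rot n₁) (rot n₂)) (rot (n₁ + n₂)) :=
    semiconj_blockEquiv_add_one _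
  have hcycles := cycles_comp_restrictTo_add_one (rot_bijective n₁) (rot_bijective n₂) hrot hσ
    hinv₁ hinv₂ hC₁ hC₂
  have hcycles' := cycles_comp_restrictTo_add_one (C := Cᶜ) (rot_bijective n₁) (rot_bijective n₂)
    hrot hσ hinv₁ hinv₂ (mapsTo_compl_of_involutive hinv₁ hC₁)
    (mapsTo_compl_of_involutive hinv₂ hC₂)
  have hgenus₁ := cycles_add_cycles_add_two_mul_pdGenus hinv₁ hfpf₁ hC₁
  have hgenus₂ := cycles_add_cycles_add_two_mul_pdGenus hinv₂ hfpf₂ hC₂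
  rw [Set.preimage_compl, Set.preimage_compl] at hcycles'
  rw [pdGenus]
  omega

end ConnectedSum

/-- The partial-dual genus polynomial is multiplicative under connected sum of
chord diagrams: if the first `2n₁` points of `σ` are paired according to `σ₁` and
the last `2n₂` points according to `σ₂` (shifted by `2n₁`), with no chord joining
the two blocks, then `∂Γ_σ = ∂Γ_{σ₁} · ∂Γ_{σ₂}`. -/
theorem pdPoly_connected_sum (n₁ n₂ : ℕ) (hn₁ : 0 < n₁) (hn₂ : 0 < n₂)
    (σ₁ : ZMod (2 * n₁) → ZMod (2 * n₁)) (σ₂ : ZMod (2 * n₂) → ZMod (2 * n₂))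
    (hinv₁ : Function.Involutive σ₁) (hfpf₁ : ∀ i, σ₁ i ≠ i)
    (hinv₂ : Function.Involutive σ₂) (hfpf₂ : ∀ i, σ₂ i ≠ i)
    (σ : ZMod (2 * (n₁ + n₂)) → ZMod (2 * (n₁ + n₂)))
    (hlo : ∀ i : ZMod (2 * (n₁ + n₂)), i.val < 2 * n₁ →
      (σ i).val = (σ₁ ((i.val : ℕ) : ZMod (2 * n₁))).val)
    (hhi : ∀ i : ZMod (2 * (n₁ + n₂)), 2 * n₁ ≤ i.val →
      (σ i).val = 2 * n₁ + (σ₂ (((i.val - 2 * n₁ : ℕ)) : ZMod (2 * n₂))).val) :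
    pdPoly (n₁ + n₂) σ = pdPoly n₁ σ₁ * pdPoly n₂ σ₂ := by
  have : NeZero n₁ := ⟨hn₁.ne'⟩
  have : NeZero n₂ := ⟨hn₂.ne'⟩
  have hσ := semiconj_blockEquiv_sumMap (mul_add 2 n₁ n₂).symm hlo hhi
  rw [pdPoly_eq_sum, pdPoly_eq_sum, pdPoly_eq_sum,
    sum_filter_invariant_mul_sum hσ (fun A => Polynomial.X ^ pdGenus n₁ σ₁ A)
      fun B => Polynomial.X ^ pdGenus n₂ σ₂ B]
  refine Finset.sum_congr rfl fun C hC => ?_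
  have hC' : Set.MapsTo σ C C := (Finset.mem_filter.1 hC).2
  rw [pdGenus_connected_sum hinv₁ hfpf₁ hinv₂ hfpf₂ hσ hC', pow_add]
end
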